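/- Let x ↦ P_x be an exhaustive coding function such that μ(⋃_{y ∈ P_x} I_y) = 2^(−|x|) for every finite word x. Then there exists a continuous tossing process T : (ℕ → Bool) → (ℕ → Bool) such that T⁻¹(I_x) = ⋃_{y ∈ P_x} I_y for every finite word x. -/

import Mathlib

open MeasureTheory

/-- The cylinder determined by a finite binary word `x`: the set of infinite binary
sequences having `x` as a prefix. -/
def Cyl (x : List Bool) : Set (ℕ → Bool) := {α | ∀ i : Fin x.length, α i.1 = x.get i}

/-- The uniform Bernoulli(1/2) ("fair coin") measure on `Bool`. -/
noncomputable def coin : Measure Bool := (PMF.bernoulli 2⁻¹ (by norm_num)).toMeasure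

/-- `μ` is the fair-coin measure on Cantor space: the product over `ℕ` of uniform
Bernoulli(1/2) measures, characterized by the fact that all finite-dimensional marginals
are finite products of `coin`. -/
def IsFairCoin (μ : Measure (ℕ → Bool)) : Prop :=
  IsProjectiveLimit μ (fun J : Finset ℕ => Measure.pi fun _ : J => coin)

/-- A binary prefix code: a nonempty set of finite binary words, no element of which is a
proper prefix of another. -/
def IsPrefixCode (P : Set (List Bool)) : Prop :=
  P.Nonempty ∧ ∀ x ∈ P, ∀ y ∈ P, x <+: y → x = y

/-- `P ⪯ Q`: every element of `Q` extends (has as a prefix) some element of `P`. -/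
def CodeLE (P Q : Set (List Bool)) : Prop := ∀ y ∈ Q, ∃ x ∈ P, x <+: y

/-- An exhaustive set of words: every infinite binary sequence has a prefix in it. -/
def IsExhaustiveCode (P : Set (List Bool)) : Prop := ∀ α : ℕ → Bool, ∃ x ∈ P, α ∈ Cyl x

/-- A coding function: each `P x` is a prefix code, `P ε = {ε}`, prefix-incomparable
words get disjoint codes, and `x` a prefix of `y` implies `P x ⪯ P y`. -/
def IsCodingFunction (P : List Bool → Set (List Bool)) : Prop :=
  (∀ x, IsPrefixCode (P x)) ∧
  P [] = {[]} ∧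
  (∀ x y : List Bool, ¬ x <+: y → ¬ y <+: x → P x ∩ P y = ∅) ∧
  ∀ x y : List Bool, x <+: y → CodeLE (P x) (P y)

/-- An exhaustive coding function: it maps exhaustive prefix codes to exhaustive
prefix codes. -/
def IsExhaustiveCodingFunction (P : List Bool → Set (List Bool)) : Prop :=
  ∀ Q : Set (List Bool), IsPrefixCode Q → IsExhaustiveCode Q →
    IsPrefixCode (⋃ x ∈ Q, P x) ∧ IsExhaustiveCode (⋃ x ∈ Q, P x)

/-!
The open sets `U x = ⋃ y ∈ P x, Cyl y` shrink as `x` grows. Applying exhaustiveness to the code of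
all words of length `n` shows that the `U x` with `|x| = n` partition Cantor space. The words `x`
with `α ∈ U x` therefore form a single branch of the binary tree, and `T α` is that branch. Then
`T ⁻¹' Cyl x = U x` is open and has the measure of `Cyl x`; as the cylinders are a basis and a
π-system, `T` is continuous and measure preserving.
-/

/-- The word `α↾n` formed by the first `n` letters of the sequence `α`; it turns membership in a
cylinder into an equation between words. -/
def initWord (α : ℕ → Bool) (n : ℕ) : List Bool := List.ofFn fun i : Fin n => α i

@[simp]
theorem length_initWord (α : ℕ → Bool) (n : ℕ) : (initWord α n).length = n :=
  List.length_ofFn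

theorem mem_cyl_iff_initWord_eq {α : ℕ → Bool} {x : List Bool} :
    α ∈ Cyl x ↔ initWord α x.length = x := by
  rw [List.ext_get_iff]
  simp [Cyl, initWord, Fin.forall_iff]

theorem mem_cyl_initWord (α : ℕ → Bool) (n : ℕ) : α ∈ Cyl (initWord α n) := by
  rw [mem_cyl_iff_initWord_eq, length_initWord]

theorem initWord_isPrefix (α : ℕ → Bool) {m n : ℕ} (h : m ≤ n) :
    initWord α m <+: initWord α n := by
  rw [List.prefix_iff_getElem]
  exact ⟨by simpa, fun i hi => by simp [initWord]⟩

theorem isPrefix_or_isPrefix_of_mem_cyl {α : ℕ → Bool} {x y : List Bool}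
    (hx : α ∈ Cyl x) (hy : α ∈ Cyl y) : x <+: y ∨ y <+: x := by
  rw [mem_cyl_iff_initWord_eq] at hx hy
  rw [← hx, ← hy]
  exact (le_total x.length y.length).imp (initWord_isPrefix α) (initWord_isPrefix α)

theorem cyl_subset_cyl {x y : List Bool} (h : x <+: y) : Cyl y ⊆ Cyl x := fun α hα i => by
  rw [hα ⟨i, i.2.trans_le h.length_le⟩]
  exact (h.getElem i.2).symm

theorem cyl_initWord (α : ℕ → Bool) (n : ℕ) : Cyl (initWord α n) = PiNat.cylinder α n := by
  ext β
  simp [Cyl, initWord, Fin.forall_iff]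

theorem exists_cylinder_eq_cyl (x : List Bool) :
    ∃ α : ℕ → Bool, PiNat.cylinder α x.length = Cyl x := by
  have hx : (fun i => x.getD i false) ∈ Cyl x := fun i => by simp
  exact ⟨_, by rw [← cyl_initWord, mem_cyl_iff_initWord_eq.1 hx]⟩

theorem isTopologicalBasis_range_cyl : TopologicalSpace.IsTopologicalBasis (Set.range Cyl) := by
  convert PiNat.isTopologicalBasis_cylinders fun _ : ℕ => Bool using 1
  ext s
  constructor
  · rintro ⟨x, rfl⟩
    obtain ⟨α, hα⟩ := exists_cylinder_eq_cyl x
    exact ⟨α, _, hα.symm⟩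
  · rintro ⟨α, n, rfl⟩
    exact ⟨_, cyl_initWord α n⟩

theorem isOpen_cyl (x : List Bool) : IsOpen (Cyl x) :=
  isTopologicalBasis_range_cyl.isOpen ⟨x, rfl⟩

theorem isPiSystem_range_cyl : IsPiSystem (Set.range Cyl) := by
  rintro _ ⟨x, rfl⟩ _ ⟨y, rfl⟩ ⟨α, hx, hy⟩
  rcases isPrefix_or_isPrefix_of_mem_cyl hx hy with h | h
  · exact ⟨y, (Set.inter_eq_right.2 (cyl_subset_cyl h)).symm⟩
  · exact ⟨x, (Set.inter_eq_left.2 (cyl_subset_cyl h)).symm⟩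

theorem measure_ext_of_cyl {μ ν : Measure (ℕ → Bool)} [IsFiniteMeasure μ]
    (h : ∀ x, μ (Cyl x) = ν (Cyl x)) : μ = ν := by
  have cyl_nil : Cyl [] = Set.univ := Set.eq_univ_of_forall fun _ i => i.elim0
  refine ext_of_generate_finite (Set.range Cyl) ?_ isPiSystem_range_cyl
    (Set.forall_mem_range.2 h) (cyl_nil ▸ h [])
  rw [BorelSpace.measurable_eq (α := ℕ → Bool), isTopologicalBasis_range_cyl.borel_eq_generateFrom]

theorem measurePreserving_of_measure_preimage_cyl {X : Type*} [MeasurableSpace X]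
    {μ : Measure X} {ν : Measure (ℕ → Bool)} [IsFiniteMeasure ν] {f : X → ℕ → Bool}
    (hf : Measurable f) (h : ∀ x, μ (f ⁻¹' Cyl x) = ν (Cyl x)) : MeasurePreserving f μ ν where
  measurable := hf
  map_eq := .symm <| measure_ext_of_cyl fun x => by
    rw [Measure.map_apply hf (isOpen_cyl x).measurableSet, h]

instance : IsProbabilityMeasure coin := PMF.toMeasure.isProbabilityMeasure _

theorem coin_singleton (b : Bool) : coin {b} = 2⁻¹ := by
  rw [coin, PMF.toMeasure_apply_singleton _ _ (measurableSet_singleton b),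
    PMF.bernoulli_apply]
  cases b <;> simp

theorem IsFairCoin.eq_infinitePi {μ : Measure (ℕ → Bool)} (hμ : IsFairCoin μ) :
    μ = Measure.infinitePi fun _ => coin :=
  IsProjectiveLimit.unique hμ (Measure.isProjectiveLimit_infinitePi _)

theorem IsFairCoin.measure_cyl {μ : Measure (ℕ → Bool)} (hμ : IsFairCoin μ) (x : List Bool) :
    μ (Cyl x) = 2 ^ (-(x.length : ℤ)) := by
  obtain ⟨α, hα⟩ := exists_cylinder_eq_cyl x
  rw [← hα, PiNat.cylinder_eq_pi, hμ.eq_infinitePi,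
    Measure.infinitePi_pi _ fun _ _ => measurableSet_singleton _]
  simp [coin_singleton, ENNReal.zpow_neg, ENNReal.inv_pow]

theorem exists_preimage_cyl_eq {X : Type*} {U : List Bool → Set X}
    (hanti : ∀ x y, x <+: y → U y ⊆ U x)
    (hpart : ∀ n a, ∃! x : List Bool, x.length = n ∧ a ∈ U x) :
    ∃ f : X → ℕ → Bool, ∀ x, f ⁻¹' Cyl x = U x := by
  choose w hw hw_unique using hpart
  have take_w {m n : ℕ} (hmn : m ≤ n) (a : X) : (w n a).take m = w m a :=
    hw_unique m a _ ⟨by simp [(hw n a).1, hmn], hanti _ _ (List.take_prefix m _) (hw n a).2⟩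
  let f (a : X) (n : ℕ) : Bool := (w (n + 1) a)[n]'(by simp [(hw (n + 1) a).1])
  have initWord_f (a : X) (n : ℕ) : initWord (f a) n = w n a := by
    refine List.ext_getElem (by simp [(hw n a).1]) fun i hi _ => ?_
    rw [length_initWord] at hi
    simp [initWord, f, ← take_w (Nat.succ_le_of_lt hi) a]
  refine ⟨f, fun x => Set.ext fun a => ?_⟩
  rw [Set.mem_preimage, mem_cyl_iff_initWord_eq, initWord_f]
  exact ⟨fun h => h ▸ (hw x.length a).2, fun h => (hw_unique x.length a x ⟨rfl, h⟩).symm⟩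

theorem isPrefixCode_setOf_length_eq (n : ℕ) : IsPrefixCode {x : List Bool | x.length = n} :=
  ⟨⟨List.replicate n false, List.length_replicate⟩,
    fun _ hx _ hy h => h.eq_of_length (hx.trans hy.symm)⟩

theorem isExhaustiveCode_setOf_length_eq (n : ℕ) :
    IsExhaustiveCode {x : List Bool | x.length = n} :=
  fun α => ⟨initWord α n, length_initWord α n, mem_cyl_initWord α n⟩

theorem IsPrefixCode.eq_of_mem_cyl {Q : Set (List Bool)} (hQ : IsPrefixCode Q)
    {x y : List Bool} (hx : x ∈ Q) (hy : y ∈ Q) {α : ℕ → Bool} (hαx : α ∈ Cyl x)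
    (hαy : α ∈ Cyl y) : x = y :=
  (isPrefix_or_isPrefix_of_mem_cyl hαx hαy).elim (hQ.2 x hx y hy) fun h => (hQ.2 y hy x hx h).symm

theorem CodeLE.iUnion_cyl_subset {Q R : Set (List Bool)} (h : CodeLE Q R) :
    ⋃ y ∈ R, Cyl y ⊆ ⋃ x ∈ Q, Cyl x :=
  Set.iUnion₂_subset fun y hy =>
    let ⟨_, hx, hxy⟩ := h y hy
    (cyl_subset_cyl hxy).trans (Set.subset_biUnion_of_mem hx)

namespace IsCodingFunction

variable {P : List Bool → Set (List Bool)}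

theorem eq_of_mem_of_mem (hcf : IsCodingFunction P) {Q : Set (List Bool)} (hQ : IsPrefixCode Q)
    {x x' y : List Bool} (hx : x ∈ Q) (hx' : x' ∈ Q) (hy : y ∈ P x) (hy' : y ∈ P x') :
    x = x' := by
  by_contra hne
  have hdisj : P x ∩ P x' = ∅ := hcf.2.2.1 x x' (fun h => hne (hQ.2 x hx x' hx' h))
    fun h => hne (hQ.2 x' hx' x hx h).symm
  exact Set.eq_empty_iff_forall_notMem.1 hdisj y ⟨hy, hy'⟩

theorem existsUnique_mem_iUnion_cyl (hcf : IsCodingFunction P)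
    (hex : IsExhaustiveCodingFunction P) {Q : Set (List Bool)} (hQ : IsPrefixCode Q)
    (hQex : IsExhaustiveCode Q) (α : ℕ → Bool) :
    ∃! x, x ∈ Q ∧ α ∈ ⋃ y ∈ P x, Cyl y := by
  obtain ⟨hcode, hcover⟩ := hex Q hQ hQex
  obtain ⟨y, hyQ, hαy⟩ := hcover α
  obtain ⟨x, hx, hy⟩ := Set.mem_iUnion₂.1 hyQ
  refine ⟨x, ⟨hx, Set.mem_biUnion hy hαy⟩, fun x' ⟨hx', hα⟩ => ?_⟩
  obtain ⟨y', hy', hαy'⟩ := Set.mem_iUnion₂.1 hα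
  obtain rfl : y' = y := hcode.eq_of_mem_cyl (Set.mem_biUnion hx' hy') hyQ hαy' hαy
  exact hcf.eq_of_mem_of_mem hQ hx' hx hy' hy

theorem exists_preimage_cyl_eq_iUnion_cyl (hcf : IsCodingFunction P)
    (hex : IsExhaustiveCodingFunction P) :
    ∃ T : (ℕ → Bool) → ℕ → Bool, ∀ x, T ⁻¹' Cyl x = ⋃ y ∈ P x, Cyl y :=
  exists_preimage_cyl_eq (fun x y h => (hcf.2.2.2 x y h).iUnion_cyl_subset) fun n =>
    hcf.existsUnique_mem_iUnion_cyl hex (isPrefixCode_setOf_length_eq n)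
      (isExhaustiveCode_setOf_length_eq n)

end IsCodingFunction

theorem stmt12_general (μ ν : Measure (ℕ → Bool)) [IsFiniteMeasure ν]
    (P : List Bool → Set (List Bool))
    (hcf : IsCodingFunction P) (hex : IsExhaustiveCodingFunction P)
    (hmeas : ∀ x : List Bool, μ (⋃ y ∈ P x, Cyl y) = ν (Cyl x)) :
    ∃ T : (ℕ → Bool) → ℕ → Bool,
      Continuous T ∧ Measurable T ∧
      (∀ A : Set (ℕ → Bool), MeasurableSet A → μ (T ⁻¹' A) = ν A) ∧
      ∀ x : List Bool, T ⁻¹' Cyl x = ⋃ y ∈ P x, Cyl y := by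
  obtain ⟨T, hT⟩ := hcf.exists_preimage_cyl_eq_iUnion_cyl hex
  have hcont : Continuous T := isTopologicalBasis_range_cyl.continuous_iff.2 <|
    Set.forall_mem_range.2 fun x => hT x ▸ isOpen_biUnion fun y _ => isOpen_cyl y
  have hpres : MeasurePreserving T μ ν :=
    measurePreserving_of_measure_preimage_cyl hcont.measurable fun x => by rw [hT, hmeas]
  exact ⟨T, hcont, hcont.measurable,
    fun _ hA => hpres.measure_preimage hA.nullMeasurableSet, hT⟩

/-- Every exhaustive coding function with `μ (⋃_{y ∈ P x} I_y) = 2^(-|x|)` arises from a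
continuous (total) tossing process `T` with `T⁻¹ I_x = ⋃_{y ∈ P x} I_y`. -/
theorem stmt12 (μ : Measure (ℕ → Bool)) (hμ : IsFairCoin μ)
    (P : List Bool → Set (List Bool))
    (hcf : IsCodingFunction P) (hex : IsExhaustiveCodingFunction P)
    (hmeas : ∀ x : List Bool, μ (⋃ y ∈ P x, Cyl y) = 2 ^ (-(x.length : ℤ))) :
    ∃ T : (ℕ → Bool) → ℕ → Bool,
      Continuous T ∧ Measurable T ∧
      (∀ A : Set (ℕ → Bool), MeasurableSet A → μ (T ⁻¹' A) = μ A) ∧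
      ∀ x : List Bool, T ⁻¹' Cyl x = ⋃ y ∈ P x, Cyl y := by
  have : IsFiniteMeasure μ := hμ.eq_infinitePi ▸ inferInstance
  exact stmt12_general μ μ P hcf hex fun x => (hmeas x).trans (hμ.measure_cyl x).symm
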